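/- arXiv:1701.04915 — 4 statements merged into one kernel-verified Lean document; each statement's English description precedes it below -/
import Mathlib

section
/- Strengthening: if Δ is a finite multiset of A-formulas and the sequent ⊢Δ is provable in the additive propositional proof system, then there exists a formula B ∈ Δ such that the singleton sequent ⊢B is provable. -/
/-- A-formulas: purely additive propositional formulas built from
conjunction, truth, disjunction, and false (no atoms). -/
inductive AForm : Type
  | conj : AForm → AForm → AForm   -- ∧
  | tt   : AForm                   -- t (unit of ∧)
  | disj : AForm → AForm → AForm   -- ∨
  | ff   : AForm                   -- f (unit of ∨)
  deriving DecidableEq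

/-- Provability of one-sided sequents ⊢Δ (Δ a finite multiset of A-formulas)
in the purely additive propositional proof system. -/
inductive AProv : Multiset AForm → Prop
  | conj {B₁ B₂ : AForm} {Δ : Multiset AForm} :
      AProv (B₁ ::ₘ Δ) → AProv (B₂ ::ₘ Δ) → AProv (AForm.conj B₁ B₂ ::ₘ Δ)
  | tt {Δ : Multiset AForm} : AProv (AForm.tt ::ₘ Δ)
  | disjL {B₁ B₂ : AForm} {Δ : Multiset AForm} :
      AProv (B₁ ::ₘ Δ) → AProv (AForm.disj B₁ B₂ ::ₘ Δ)
  | disjR {B₁ B₂ : AForm} {Δ : Multiset AForm} :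
      AProv (B₂ ::ₘ Δ) → AProv (AForm.disj B₁ B₂ ::ₘ Δ)

/-- Truth of an A-formula under the classical reading of the connectives; with no atoms around, no
valuation is needed. Provability of a sequent turns out to mean that one of its formulas is true. -/
def AForm.Holds : AForm → Prop
  | conj B₁ B₂ => B₁.Holds ∧ B₂.Holds
  | tt => True
  | disj B₁ B₂ => B₁.Holds ∨ B₂.Holds
  | ff => False

theorem AForm.Holds.aprov_cons {B : AForm} (hB : B.Holds) (Δ : Multiset AForm) :
    AProv (B ::ₘ Δ) := by
  induction B with
  | conj B₁ B₂ ih₁ ih₂ => exact .conj (ih₁ hB.1) (ih₂ hB.2)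
  | tt => exact .tt
  | disj B₁ B₂ ih₁ ih₂ =>
    rcases hB with hB₁ | hB₂
    · exact .disjL (ih₁ hB₁)
    · exact .disjR (ih₂ hB₂)
  | ff => exact hB.elim

theorem AProv.exists_mem_holds {Δ : Multiset AForm} (h : AProv Δ) : ∃ B ∈ Δ, B.Holds := by
  induction h with
  | conj _ _ ih₁ ih₂ =>
    simp only [Multiset.mem_cons, exists_eq_or_imp] at ih₁ ih₂ ⊢
    exact and_or_right.mpr ⟨ih₁, ih₂⟩
  | tt => exact ⟨.tt, Multiset.mem_cons_self _ _, trivial⟩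
  | disjL _ ih =>
    simp only [Multiset.mem_cons, exists_eq_or_imp] at ih ⊢
    exact ih.imp_left Or.inl
  | disjR _ ih =>
    simp only [Multiset.mem_cons, exists_eq_or_imp] at ih ⊢
    exact ih.imp_left Or.inr

/-- Strengthening: if ⊢Δ is provable then some B ∈ Δ satisfies ⊢B. -/
theorem strengthening (Δ : Multiset AForm) (h : AProv Δ) :
    ∃ B ∈ Δ, AProv {B} := by
  obtain ⟨B, hBΔ, hB⟩ := h.exists_mem_holds
  exact ⟨B, hBΔ, hB.aprov_cons 0⟩
end

section
/- First-order strengthening: fix a ranked signature Σ admitting at least one closed Σ-term. If Δ is a finite multiset of closed first-order additive formulas over Σ and the sequent ⊢Δ is provable in the first-order additive proof system with the extensional ∀-rule, then there exists a formula B ∈ Δ such that ⊢B is provable. -/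
/-- Terms over a ranked signature `σ` with arity function `ar`,
with de Bruijn variables for quantifier binding. -/
inductive Tm (σ : Type) (ar : σ → ℕ) : Type
  | var : ℕ → Tm σ ar
  | app : (f : σ) → (Fin (ar f) → Tm σ ar) → Tm σ ar

namespace Tm

variable {σ : Type} {ar : σ → ℕ}

/-- A term is closed under `k` binders if all its de Bruijn variables are below `k`. -/
def ClosedUnder (k : ℕ) : Tm σ ar → Prop
  | var n => n < k
  | app _ args => ∀ i, ClosedUnder k (args i)

/-- A closed Σ-term: one with no variables at all. -/
def Closed (t : Tm σ ar) : Prop := ClosedUnder 0 t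

/-- Substitute the (closed) term `u` for de Bruijn variable `k`. -/
def subst (k : ℕ) (u : Tm σ ar) : Tm σ ar → Tm σ ar
  | var n => if n = k then u else var n
  | app f args => app f (fun i => subst k u (args i))

end Tm

/-- First-order additive formulas over the signature: equations and
inequations between terms, additive connectives, and quantifiers
(de Bruijn style binding). -/
inductive Fm (σ : Type) (ar : σ → ℕ) : Type
  | eq   : Tm σ ar → Tm σ ar → Fm σ ar   -- s = t
  | ne   : Tm σ ar → Tm σ ar → Fm σ ar   -- s ≠ t
  | conj : Fm σ ar → Fm σ ar → Fm σ ar   -- ∧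
  | tt   : Fm σ ar                        -- t
  | disj : Fm σ ar → Fm σ ar → Fm σ ar   -- ∨
  | ff   : Fm σ ar                        -- f
  | all  : Fm σ ar → Fm σ ar             -- ∀
  | ex   : Fm σ ar → Fm σ ar             -- ∃

namespace Fm

variable {σ : Type} {ar : σ → ℕ}

/-- A formula is closed under `k` binders. -/
def ClosedUnder : ℕ → Fm σ ar → Prop
  | k, eq s t => s.ClosedUnder k ∧ t.ClosedUnder k
  | k, ne s t => s.ClosedUnder k ∧ t.ClosedUnder k
  | k, conj B C => ClosedUnder k B ∧ ClosedUnder k C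
  | _, tt => True
  | k, disj B C => ClosedUnder k B ∧ ClosedUnder k C
  | _, ff => True
  | k, all B => ClosedUnder (k + 1) B
  | k, ex B => ClosedUnder (k + 1) B

/-- A closed formula: no free variables. -/
def Closed (B : Fm σ ar) : Prop := ClosedUnder 0 B

/-- Capture-avoiding substitution of the closed term `u` for de Bruijn
variable `k` in a formula. -/
def subst (k : ℕ) (u : Tm σ ar) : Fm σ ar → Fm σ ar
  | eq s t => eq (s.subst k u) (t.subst k u)
  | ne s t => ne (s.subst k u) (t.subst k u)
  | conj B C => conj (subst k u B) (subst k u C)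
  | tt => tt
  | disj B C => disj (subst k u B) (subst k u C)
  | ff => ff
  | all B => all (subst (k + 1) u B)
  | ex B => ex (subst (k + 1) u B)

end Fm

/-- Provability of one-sided sequents ⊢Δ of closed first-order additive
formulas, with the extensional (infinite-premise) rule for ∀. -/
inductive FProv {σ : Type} {ar : σ → ℕ} : Multiset (Fm σ ar) → Prop
  | conj {B₁ B₂ : Fm σ ar} {Δ : Multiset (Fm σ ar)} :
      FProv (B₁ ::ₘ Δ) → FProv (B₂ ::ₘ Δ) → FProv (Fm.conj B₁ B₂ ::ₘ Δ)
  | tt {Δ : Multiset (Fm σ ar)} : FProv (Fm.tt ::ₘ Δ)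
  | disjL {B₁ B₂ : Fm σ ar} {Δ : Multiset (Fm σ ar)} :
      FProv (B₁ ::ₘ Δ) → FProv (Fm.disj B₁ B₂ ::ₘ Δ)
  | disjR {B₁ B₂ : Fm σ ar} {Δ : Multiset (Fm σ ar)} :
      FProv (B₂ ::ₘ Δ) → FProv (Fm.disj B₁ B₂ ::ₘ Δ)
  | eq {t : Tm σ ar} {Δ : Multiset (Fm σ ar)} :
      t.Closed → FProv (Fm.eq t t ::ₘ Δ)
  | ne {t s : Tm σ ar} {Δ : Multiset (Fm σ ar)} :
      t.Closed → s.Closed → t ≠ s → FProv (Fm.ne t s ::ₘ Δ)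
  | ex {B : Fm σ ar} {t : Tm σ ar} {Δ : Multiset (Fm σ ar)} :
      t.Closed → FProv (B.subst 0 t ::ₘ Δ) → FProv (Fm.ex B ::ₘ Δ)
  | all {B : Fm σ ar} {Δ : Multiset (Fm σ ar)} :
      (∀ t : Tm σ ar, t.Closed → FProv (B.subst 0 t ::ₘ Δ)) →
      FProv (Fm.all B ::ₘ Δ)

/-!
Every rule has one principal formula and passes its context `Δ` unchanged to all premises. So if
each premise has a member provable on its own, then either some formula of `Δ` is, or, in every
premise, the active formula is, and applying the rule in the empty context proves the principal
formula. For `∀` this dichotomy is classical: it pulls a disjunct out of an infinite conjunction.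
-/

/-- The sequent `Δ` contains a formula that is provable on its own. This is the property shown to be
preserved by every rule of the calculus. -/
def HasProvableMember {σ : Type} {ar : σ → ℕ} (Δ : Multiset (Fm σ ar)) : Prop :=
  ∃ B ∈ Δ, FProv {B}

namespace HasProvableMember

variable {σ : Type} {ar : σ → ℕ} {B C : Fm σ ar} {Δ : Multiset (Fm σ ar)}

theorem cons_iff : HasProvableMember (B ::ₘ Δ) ↔ FProv {B} ∨ HasProvableMember Δ := by
  simp only [HasProvableMember, Multiset.mem_cons, exists_eq_or_imp]

theorem of_head (hB : FProv {B}) : HasProvableMember (B ::ₘ Δ) :=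
  cons_iff.2 (.inl hB)

theorem imp_head (hBC : FProv {B} → FProv {C}) (h : HasProvableMember (B ::ₘ Δ)) :
    HasProvableMember (C ::ₘ Δ) :=
  cons_iff.2 ((cons_iff.1 h).imp_left hBC)

theorem conj (hB : HasProvableMember (B ::ₘ Δ)) (hC : HasProvableMember (C ::ₘ Δ)) :
    HasProvableMember (Fm.conj B C ::ₘ Δ) := by
  have heads_or_context : (FProv {B} ∧ FProv {C}) ∨ HasProvableMember Δ :=
    and_or_right.2 ⟨cons_iff.1 hB, cons_iff.1 hC⟩
  exact cons_iff.2 (heads_or_context.imp_left fun ⟨hB, hC⟩ => .conj hB hC)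

theorem all (h : ∀ t : Tm σ ar, t.Closed → HasProvableMember (B.subst 0 t ::ₘ Δ)) :
    HasProvableMember (Fm.all B ::ₘ Δ) := by
  have instances_or_context :
      (∀ t : Tm σ ar, t.Closed → FProv {B.subst 0 t}) ∨ HasProvableMember Δ := by
    simpa only [cons_iff, forall_or_right] using h
  exact cons_iff.2 (instances_or_context.imp_left .all)

end HasProvableMember

/-- First-order strengthening: over a signature admitting a closed term,
if Δ is a multiset of closed formulas and ⊢Δ is provable, then ⊢B is
provable for some B ∈ Δ. -/
theorem fo_strengthening {σ : Type} {ar : σ → ℕ}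
    (hσ : ∃ t : Tm σ ar, t.Closed)
    (Δ : Multiset (Fm σ ar)) (hΔ : ∀ B ∈ Δ, Fm.Closed B)
    (h : FProv Δ) : ∃ B ∈ Δ, FProv {B} := by
  clear hΔ
  change HasProvableMember Δ
  induction h with
  | conj _ _ ih₁ ih₂ => exact ih₁.conj ih₂
  | tt => exact .of_head .tt
  | disjL _ ih => exact ih.imp_head .disjL
  | disjR _ ih => exact ih.imp_head .disjR
  | eq ht => exact .of_head (.eq ht)
  | ne ht hs hts => exact .of_head (.ne ht hs hts)
  | ex ht _ ih => exact ih.imp_head (.ex ht)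
  | all _ ih => exact .all ih
end

section
/- First-order weakening and contraction admissibility: fix a ranked signature Σ admitting at least one closed Σ-term. If Δ₁ and Δ₂ are finite multisets of closed first-order additive formulas over Σ such that every formula occurring in Δ₁ also occurs in Δ₂ (Δ₁ ⊆ Δ₂ as sets), and ⊢Δ₁ is provable in the first-order additive proof system with the extensional ∀-rule, then ⊢Δ₂ is provable. -/
/-!
Every rule acts on a single formula and copies its context unchanged, so a derivation of `⊢ Δ`
really proves one formula `B` of `Δ`, in any context whatsoever. The only delicate rule is `∀`,
whose premises may single out different formulas: classically, either some premise singles out a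
formula of the context, or all of them single out their instance of the quantified formula.
Weakening and contraction follow, since `B` occurs in every sequent that contains the formulas
of `Δ`.
-/

theorem exists_mem_multiset_cons_iff {α : Type*} {p : α → Prop} {a : α} {s : Multiset α} :
    (∃ b ∈ a ::ₘ s, p b) ↔ p a ∨ ∃ b ∈ s, p b := by
  simp only [Multiset.mem_cons, exists_eq_or_imp]

namespace Fm

variable {σ : Type} {ar : σ → ℕ} {B C : Fm σ ar} {s t : Tm σ ar} {Δ : Multiset (Fm σ ar)}

/-- A formula is uniformly provable if it is provable in every context. As the calculus has no
weakening rule, this is a priori stronger than provability of the one-formula sequent `⊢ B`. -/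
def UniformlyProvable (B : Fm σ ar) : Prop := ∀ Γ : Multiset (Fm σ ar), FProv (B ::ₘ Γ)

namespace UniformlyProvable

theorem tt : (Fm.tt : Fm σ ar).UniformlyProvable := fun _ => FProv.tt

theorem eq (ht : t.Closed) : (Fm.eq t t).UniformlyProvable := fun _ => FProv.eq ht

theorem ne (ht : t.Closed) (hs : s.Closed) (hts : t ≠ s) : (Fm.ne t s).UniformlyProvable :=
  fun _ => FProv.ne ht hs hts

theorem conj (hB : B.UniformlyProvable) (hC : C.UniformlyProvable) :
    (Fm.conj B C).UniformlyProvable :=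
  fun Γ => FProv.conj (hB Γ) (hC Γ)

theorem disj_left (hB : B.UniformlyProvable) : (Fm.disj B C).UniformlyProvable :=
  fun Γ => FProv.disjL (hB Γ)

theorem disj_right (hC : C.UniformlyProvable) : (Fm.disj B C).UniformlyProvable :=
  fun Γ => FProv.disjR (hC Γ)

theorem ex (ht : t.Closed) (hB : (B.subst 0 t).UniformlyProvable) :
    (Fm.ex B).UniformlyProvable :=
  fun Γ => FProv.ex ht (hB Γ)

theorem all (hB : ∀ t : Tm σ ar, t.Closed → (B.subst 0 t).UniformlyProvable) :
    (Fm.all B).UniformlyProvable :=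
  fun Γ => FProv.all fun t ht => hB t ht Γ

theorem fProv_of_mem (hB : B.UniformlyProvable) (hmem : B ∈ Δ) : FProv Δ := by
  obtain ⟨Γ, rfl⟩ := Multiset.exists_cons_of_mem hmem
  exact hB Γ

end UniformlyProvable

end Fm

theorem FProv.exists_mem_uniformlyProvable {σ : Type} {ar : σ → ℕ} {Δ : Multiset (Fm σ ar)}
    (h : FProv Δ) : ∃ B ∈ Δ, B.UniformlyProvable := by
  induction h with
  | tt => exact ⟨_, Multiset.mem_cons_self _ _, .tt⟩
  | eq ht => exact ⟨_, Multiset.mem_cons_self _ _, .eq ht⟩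
  | ne ht hs hts => exact ⟨_, Multiset.mem_cons_self _ _, .ne ht hs hts⟩
  | conj _ _ ih₁ ih₂ =>
    rw [exists_mem_multiset_cons_iff] at ih₁ ih₂ ⊢
    exact (and_or_right.2 ⟨ih₁, ih₂⟩).imp_left fun ⟨h₁, h₂⟩ => h₁.conj h₂
  | disjL _ ih =>
    rw [exists_mem_multiset_cons_iff] at ih ⊢
    exact ih.imp_left .disj_left
  | disjR _ ih =>
    rw [exists_mem_multiset_cons_iff] at ih ⊢
    exact ih.imp_left .disj_right
  | ex ht _ ih =>
    rw [exists_mem_multiset_cons_iff] at ih ⊢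
    exact ih.imp_left (.ex ht)
  | all _ ih =>
    simp only [exists_mem_multiset_cons_iff] at ih ⊢
    exact or_iff_not_imp_right.2 fun hΔ => .all fun t ht => (ih t ht).resolve_right hΔ

/-- First-order weakening and contraction admissibility. -/
theorem fo_weakening_contraction_admissibility {σ : Type} {ar : σ → ℕ}
    (hσ : ∃ t : Tm σ ar, t.Closed)
    (Δ₁ Δ₂ : Multiset (Fm σ ar))
    (hΔ₁ : ∀ B ∈ Δ₁, Fm.Closed B) (hΔ₂ : ∀ B ∈ Δ₂, Fm.Closed B)
    (hsub : ∀ B : Fm σ ar, B ∈ Δ₁ → B ∈ Δ₂)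
    (h : FProv Δ₁) : FProv Δ₂ := by
  obtain ⟨B, hB, hprov⟩ := h.exists_mem_uniformlyProvable
  exact hprov.fProv_of_mem (hsub B hB)
end

section
/- First-order cut admissibility: fix a ranked signature Σ admitting at least one closed Σ-term. Let B be a closed first-order additive formula over Σ and let Δ₁, Δ₂ be finite multisets of closed first-order additive formulas over Σ. If both ⊢B,Δ₁ and ⊢¬B,Δ₂ are provable in the first-order additive proof system with the extensional ∀-rule (where ¬B is the negation normal form of the negation of B), then ⊢Δ₁,Δ₂ (the multiset union) is provable. -/
/-- Negation normal form of the negation of a formula, by de Morgan duality. -/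
def Fm.neg {σ : Type} {ar : σ → ℕ} : Fm σ ar → Fm σ ar
  | Fm.eq s t => Fm.ne s t
  | Fm.ne s t => Fm.eq s t
  | Fm.conj B C => Fm.disj B.neg C.neg
  | Fm.tt => Fm.ff
  | Fm.disj B C => Fm.conj B.neg C.neg
  | Fm.ff => Fm.tt
  | Fm.all B => Fm.ex B.neg
  | Fm.ex B => Fm.all B.neg

/-!
Every rule decomposes one formula and hands the others unchanged to all its premises, so `⊢ Δ` is
provable exactly when some member of `Δ` is true in the Herbrand universe of closed terms. Cut then
reduces to the consistency of truth: since `B` and `B.neg` cannot both be true, a true member of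
`B, Δ₁` and one of `B.neg, Δ₂` yield a true member of `Δ₁` or of `Δ₂`.
-/

namespace Fm

variable {σ : Type} {ar : σ → ℕ} {B : Fm σ ar}

/-- Truth of a formula in the Herbrand universe of closed terms, where `=` is syntactic identity.
It is inductive because the premises of the quantifier clauses are instances of the formula, not
subformulas. As in the proof system, an atom with a free variable is never true. -/
inductive Holds : Fm σ ar → Prop
  | conj {B C : Fm σ ar} : B.Holds → C.Holds → (conj B C).Holds
  | tt : tt.Holds
  | disjL {B C : Fm σ ar} : B.Holds → (disj B C).Holds
  | disjR {B C : Fm σ ar} : C.Holds → (disj B C).Holds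
  | eq {t : Tm σ ar} : t.Closed → (eq t t).Holds
  | ne {t s : Tm σ ar} : t.Closed → s.Closed → t ≠ s → (ne t s).Holds
  | ex {B : Fm σ ar} {t : Tm σ ar} : t.Closed → (B.subst 0 t).Holds → (ex B).Holds
  | all {B : Fm σ ar} : (∀ t : Tm σ ar, t.Closed → (B.subst 0 t).Holds) → (all B).Holds

theorem neg_subst (B : Fm σ ar) (k : ℕ) (u : Tm σ ar) :
    (B.subst k u).neg = B.neg.subst k u := by
  induction B generalizing k <;> simp_all [neg, subst]

theorem Holds.not_holds_neg (h : B.Holds) : ¬ B.neg.Holds := by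
  induction h with
  | conj _ _ ihB ihC => exact fun
    | .disjL hB => ihB hB
    | .disjR hC => ihC hC
  | tt => exact nofun
  | disjL _ ih => exact fun | .conj hB _ => ih hB
  | disjR _ ih => exact fun | .conj _ hC => ih hC
  | eq _ => exact fun | .ne _ _ hne => hne rfl
  | ne _ _ hne => exact fun | .eq _ => hne rfl
  | ex ht _ ih => exact fun | .all hB => ih (neg_subst .. ▸ hB _ ht)
  | all _ ih => exact fun | .ex ht hB => ih _ ht (neg_subst .. ▸ hB)

theorem Holds.fProv_cons (h : B.Holds) (Δ : Multiset (Fm σ ar)) : FProv (B ::ₘ Δ) := by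
  induction h with
  | conj _ _ ihB ihC => exact .conj ihB ihC
  | tt => exact .tt
  | disjL _ ih => exact .disjL ih
  | disjR _ ih => exact .disjR ih
  | eq ht => exact .eq ht
  | ne ht hs hne => exact .ne ht hs hne
  | ex ht _ ih => exact .ex ht ih
  | all _ ih => exact .all ih

end Fm

namespace FProv

variable {σ : Type} {ar : σ → ℕ} {Δ : Multiset (Fm σ ar)}

theorem exists_holds (h : FProv Δ) : ∃ C ∈ Δ, C.Holds := by
  induction h <;> simp only [Multiset.mem_cons, exists_eq_or_imp] at *
  case conj ih₁ ih₂ => exact (and_or_right.mpr ⟨ih₁, ih₂⟩).imp_left fun ⟨h₁, h₂⟩ => .conj h₁ h₂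
  case tt => exact .inl .tt
  case disjL ih => exact ih.imp_left .disjL
  case disjR ih => exact ih.imp_left .disjR
  case eq ht => exact .inl (.eq ht)
  case ne ht hs hne => exact .inl (.ne ht hs hne)
  case ex ht _ ih => exact ih.imp_left (.ex ht)
  case all ih =>
    -- Infinitely many premises: decide once, before choosing `t`, whether a side formula is true.
    exact or_iff_not_imp_right.mpr fun hΔ => .all fun t ht => (ih t ht).resolve_right hΔ

theorem iff_exists_holds : FProv Δ ↔ ∃ C ∈ Δ, C.Holds := by
  refine ⟨exists_holds, fun ⟨C, hC, hC_holds⟩ => ?_⟩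
  obtain ⟨Γ, rfl⟩ := Multiset.exists_cons_of_mem hC
  exact hC_holds.fProv_cons Γ

end FProv

/-- First-order cut admissibility. -/
theorem fo_cut_admissibility {σ : Type} {ar : σ → ℕ}
    (hσ : ∃ t : Tm σ ar, t.Closed)
    (B : Fm σ ar) (hB : B.Closed)
    (Δ₁ Δ₂ : Multiset (Fm σ ar))
    (hΔ₁ : ∀ C ∈ Δ₁, Fm.Closed C) (hΔ₂ : ∀ C ∈ Δ₂, Fm.Closed C)
    (h₁ : FProv (B ::ₘ Δ₁)) (h₂ : FProv (B.neg ::ₘ Δ₂)) :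
    FProv (Δ₁ + Δ₂) := by
  rw [FProv.iff_exists_holds] at h₁ h₂ ⊢
  simp only [Multiset.mem_cons, exists_eq_or_imp] at h₁ h₂
  simp only [Multiset.mem_add, or_and_right, exists_or]
  rcases h₁ with hB_holds | hΔ₁_holds
  · exact .inr (h₂.resolve_left hB_holds.not_holds_neg)
  · exact .inl hΔ₁_holds
end
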